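/- Let Γ be a group generated by a finite symmetric set S, equipped with the word metric d_S, let A ⊆ Γ be a nonempty subset, and let R > 0. Then, with both A and the R-neighborhood N_R(A) = { γ ∈ Γ : dist(γ, A) ≤ R } given the subspace metric, ad_{N_R(A)} ≈ ad_A. -/

import Mathlib

open Metric

namespace AsDim

/-- A family of subsets is a cover if its union is everything. -/
def IsCover {X : Type*} (𝒰 : Set (Set X)) : Prop := ⋃₀ 𝒰 = Set.univ

/-- A family of subsets of a metric space is uniformly bounded if there is a
common finite bound on the diameters of its members. -/
def UnifBounded {X : Type*} [MetricSpace X] (𝒰 : Set (Set X)) : Prop :=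
  ∃ B : ℝ, 0 ≤ B ∧ ∀ U ∈ 𝒰, EMetric.diam U ≤ ENNReal.ofReal B

/-- A family has Lebesgue number at least `lam` if every subset of diameter at most
`lam` is contained in some member of the family. -/
def LebesgueGE {X : Type*} [MetricSpace X] (𝒰 : Set (Set X)) (lam : ℝ) : Prop :=
  ∀ A : Set X, EMetric.diam A ≤ ENNReal.ofReal lam → ∃ U ∈ 𝒰, A ⊆ U

/-- The multiplicity of a family: the supremum over points of the number of
members containing that point. -/
noncomputable def mult {X : Type*} (𝒰 : Set (Set X)) : ℕ∞ :=
  ⨆ x : X, {U | U ∈ 𝒰 ∧ x ∈ U}.encard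

/-- The asymptotic dimension function:
`ad_X(lam) = min { mult 𝒰 : 𝒰 a uniformly bounded cover with Lebesgue number ≥ lam } - 1`. -/
noncomputable def adFun (X : Type*) [MetricSpace X] (lam : ℝ) : ℕ∞ :=
  sInf {m : ℕ∞ | ∃ 𝒰 : Set (Set X),
    IsCover 𝒰 ∧ UnifBounded 𝒰 ∧ LebesgueGE 𝒰 lam ∧ m = mult 𝒰} - 1

/-- `f ≼ g` : there is `k ∈ ℕ` with `f x ≤ k * g (k*x+k) + k` for all `x > 0`. -/
def GrowLE (f g : ℝ → ℕ∞) : Prop :=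
  ∃ k : ℕ, ∀ x : ℝ, 0 < x → f x ≤ (k : ℕ∞) * g ((k : ℝ) * x + (k : ℝ)) + (k : ℕ∞)

/-- `f ≈ g` : same growth. -/
def GrowEquiv (f g : ℝ → ℕ∞) : Prop := GrowLE f g ∧ GrowLE g f

/-- `asdim X ≤ n`. -/
def AsdimLE (X : Type*) [MetricSpace X] (n : ℕ) : Prop :=
  ∀ lam : ℝ, 0 < lam → ∃ 𝒰 : Set (Set X),
    IsCover 𝒰 ∧ UnifBounded 𝒰 ∧ LebesgueGE 𝒰 lam ∧ mult 𝒰 ≤ (n : ℕ∞) + 1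

/-- Bounded geometry (as a discrete space): uniform finite bound on the
cardinality of balls of each radius. -/
def BoundedGeometry (X : Type*) [MetricSpace X] : Prop :=
  ∀ r : ℝ, 0 < r → ∃ c : ℕ, ∀ x : X, (Metric.closedBall x r).encard ≤ (c : ℕ∞)

/-- `(lam, eps, C)`-quasi-isometry. -/
def IsQuasiIsometry {X Y : Type*} [MetricSpace X] [MetricSpace Y]
    (lam eps C : ℝ) (f : X → Y) : Prop :=
  1 ≤ lam ∧ 0 ≤ eps ∧ 0 ≤ C ∧
  (∀ x x' : X, (1 / lam) * dist x x' - eps ≤ dist (f x) (f x') ∧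
      dist (f x) (f x') ≤ lam * dist x x' + eps) ∧
  (∀ y : Y, ∃ x : X, dist y (f x) ≤ C)

/-- Two metric spaces are quasi-isometric if some quasi-isometry exists. -/
def QuasiIsometric (X Y : Type*) [MetricSpace X] [MetricSpace Y] : Prop :=
  ∃ (lam eps C : ℝ) (f : X → Y), IsQuasiIsometry lam eps C f

/-- Word distance with respect to a generating set `S`. -/
noncomputable def wordDist {Γ : Type*} [Group Γ] (S : Set Γ) (g h : Γ) : ℕ :=
  sInf {n : ℕ | ∃ l : List Γ, (∀ x ∈ l, x ∈ S) ∧ l.length = n ∧ l.prod = g⁻¹ * h}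

/-- The metric on the group `Γ` is the word metric of the finite symmetric
generating set `S`. -/
def IsWordMetric {Γ : Type*} [Group Γ] [MetricSpace Γ] (S : Finset Γ) : Prop :=
  (∀ s ∈ S, s⁻¹ ∈ S) ∧ Subgroup.closure (S : Set Γ) = ⊤ ∧
  ∀ g h : Γ, dist g h = wordDist (S : Set Γ) g h

end AsDim

namespace AsDim

/-! A cover of `Y` pulls back along `f : X → Y` to a cover of `X` whose multiplicity is no larger.
If `f` is a quasi-isometry, uniform boundedness survives and the Lebesgue number drops at most
affinely, which `≼` absorbs; as quasi-isometries have quasi-inverses, `ad` is a quasi-isometry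
invariant up to `≈`. The inclusion of `A` into its `R`-neighborhood is isometric with
`(R + 1)`-dense image, hence a quasi-isometry; the extra `1` is there because the distance to `A`
need not be attained. -/

theorem ediam_le_ofReal_iff {X : Type*} [PseudoMetricSpace X] {T : Set X} {r : ℝ} (hr : 0 ≤ r) :
    ediam T ≤ ENNReal.ofReal r ↔ ∀ x ∈ T, ∀ y ∈ T, dist x y ≤ r := by
  simp only [ediam_le_iff, edist_le_ofReal hr]

section Pullback

variable {X Y : Type*} {𝒱 : Set (Set Y)}

theorem IsCover.preimage (h𝒱 : IsCover 𝒱) (f : X → Y) : IsCover (Set.preimage f '' 𝒱) := by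
  rw [IsCover, Set.sUnion_image, ← Set.preimage_iUnion₂, ← Set.sUnion_eq_biUnion, h𝒱,
    Set.preimage_univ]

theorem mult_preimage_le (f : X → Y) (𝒱 : Set (Set Y)) :
    mult (Set.preimage f '' 𝒱) ≤ mult 𝒱 := by
  refine iSup_le fun x => ?_
  have hsub : {U | U ∈ Set.preimage f '' 𝒱 ∧ x ∈ U} ⊆
      Set.preimage f '' {V | V ∈ 𝒱 ∧ f x ∈ V} := by
    rintro _ ⟨⟨V, hV, rfl⟩, hx⟩
    exact ⟨V, ⟨hV, hx⟩, rfl⟩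
  calc {U | U ∈ Set.preimage f '' 𝒱 ∧ x ∈ U}.encard
      ≤ (Set.preimage f '' {V | V ∈ 𝒱 ∧ f x ∈ V}).encard := Set.encard_le_encard hsub
    _ ≤ {V | V ∈ 𝒱 ∧ f x ∈ V}.encard := Set.encard_image_le _ _
    _ ≤ mult 𝒱 := le_iSup (fun y => {V | V ∈ 𝒱 ∧ y ∈ V}.encard) (f x)

variable [MetricSpace X] [MetricSpace Y] {f : X → Y}

theorem UnifBounded.preimage (h𝒱 : UnifBounded 𝒱)
    (hf : ∀ B, ∃ C, ∀ x x', dist (f x) (f x') ≤ B → dist x x' ≤ C) :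
    UnifBounded (Set.preimage f '' 𝒱) := by
  obtain ⟨B, hB, h𝒱B⟩ := h𝒱
  obtain ⟨C, hC⟩ := hf B
  refine ⟨max C 0, le_max_right C 0, Set.forall_mem_image.2 fun V hV => ?_⟩
  refine (ediam_le_ofReal_iff (le_max_right C 0)).2 fun x hx x' hx' => ?_
  exact le_max_of_le_left <| hC x x' ((ediam_le_ofReal_iff hB).1 (h𝒱B V hV) _ hx _ hx')

theorem LebesgueGE.preimage {r s : ℝ} (h𝒱 : LebesgueGE 𝒱 s) (hr : 0 ≤ r) (hs : 0 ≤ s)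
    (hf : ∀ x x', dist x x' ≤ r → dist (f x) (f x') ≤ s) :
    LebesgueGE (Set.preimage f '' 𝒱) r := by
  intro T hT
  replace hT := (ediam_le_ofReal_iff hr).1 hT
  have himage : ediam (f '' T) ≤ ENNReal.ofReal s := by
    rw [ediam_le_ofReal_iff hs, Set.forall_mem_image]
    exact fun x hx => Set.forall_mem_image.2 fun x' hx' => hf x x' (hT x hx x' hx')
  obtain ⟨V, hV, hTV⟩ := h𝒱 (f '' T) himage
  exact ⟨f ⁻¹' V, Set.mem_image_of_mem _ hV, Set.image_subset_iff.1 hTV⟩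

theorem adFun_le_adFun (hf : ∀ B, ∃ C, ∀ x x', dist (f x) (f x') ≤ B → dist x x' ≤ C)
    {r s : ℝ} (hr : 0 ≤ r) (hs : 0 ≤ s) (hrs : ∀ x x', dist x x' ≤ r → dist (f x) (f x') ≤ s) :
    adFun X r ≤ adFun Y s := by
  refine tsub_le_tsub_right (le_sInf ?_) 1
  rintro _ ⟨𝒱, hcover, hbounded, hLebesgue, rfl⟩
  refine le_trans (sInf_le ⟨Set.preimage f '' 𝒱, ?_, ?_, ?_, rfl⟩) (mult_preimage_le f 𝒱)
  · exact hcover.preimage f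
  · exact hbounded.preimage hf
  · exact hLebesgue.preimage hr hs hrs

theorem growLE_adFun_of_dist_le (hf : ∀ B, ∃ C, ∀ x x', dist (f x) (f x') ≤ B → dist x x' ≤ C)
    {L c : ℝ} (hLc : ∀ x x', dist (f x) (f x') ≤ L * dist x x' + c) :
    GrowLE (adFun X) (adFun Y) := by
  obtain ⟨k, hk⟩ := exists_nat_ge (max 1 (max L c))
  obtain ⟨h1k, hLk, hck⟩ : (1 : ℝ) ≤ k ∧ L ≤ k ∧ c ≤ k := by simpa only [max_le_iff] using hk
  have h1k' : (1 : ℕ∞) ≤ k := by exact_mod_cast h1k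
  refine ⟨k, fun r hr => ?_⟩
  calc adFun X r ≤ adFun Y (k * r + k) := by
        refine adFun_le_adFun hf hr.le (by positivity) fun x x' hxx' => (hLc x x').trans ?_
        gcongr
    _ ≤ k * adFun Y (k * r + k) := le_mul_of_one_le_left zero_le h1k'
    _ ≤ k * adFun Y (k * r + k) + k := le_self_add

end Pullback

section QuasiIsometry

variable {X Y : Type*} [MetricSpace X] [MetricSpace Y] {f : X → Y} {lam eps C : ℝ}

theorem IsQuasiIsometry.dist_le (hf : IsQuasiIsometry lam eps C f) (x x' : X) :
    dist x x' ≤ lam * (dist (f x) (f x') + eps) := by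
  obtain ⟨hlam, -, -, hdist, -⟩ := hf
  rw [← div_le_iff₀' (zero_lt_one.trans_le hlam), div_eq_inv_mul, ← one_div]
  exact sub_le_iff_le_add.1 (hdist x x').1

theorem IsQuasiIsometry.growLE_adFun (hf : IsQuasiIsometry lam eps C f) :
    GrowLE (adFun X) (adFun Y) := by
  have hlam : 0 ≤ lam := zero_le_one.trans hf.1
  refine growLE_adFun_of_dist_le (fun B => ⟨lam * (B + eps), fun x x' hB => ?_⟩)
    fun x x' => (hf.2.2.2.1 x x').2
  exact (hf.dist_le x x').trans (by gcongr)

theorem IsQuasiIsometry.quasiInverse (hf : IsQuasiIsometry lam eps C f) {g : Y → X}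
    (hg : ∀ y, dist y (f (g y)) ≤ C) :
    IsQuasiIsometry lam (lam * (eps + 2 * C)) (lam * (C + eps)) g := by
  have ⟨hlam, heps, hC, hdist, _⟩ := hf
  have hlam₀ : 0 < lam := zero_lt_one.trans_le hlam
  refine ⟨hlam, by positivity, by positivity, fun y y' => ⟨?_, ?_⟩, fun x => ⟨f x, ?_⟩⟩
  · have hy : dist y y' ≤ lam * (dist (g y) (g y') + lam * (eps + 2 * C)) := by
      have hslack : eps + 2 * C ≤ lam * (lam * (eps + 2 * C)) := by
        rw [← mul_assoc]
        exact le_mul_of_one_le_left (by positivity) (one_le_mul_of_one_le_of_one_le hlam hlam)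
      linarith [dist_triangle4_right y y' (f (g y)) (f (g y')), hg y, hg y',
        (hdist (g y) (g y')).2]
    rwa [sub_le_iff_le_add, one_div, ← div_eq_inv_mul, div_le_iff₀' hlam₀]
  · have hy : dist (f (g y)) (f (g y')) ≤ dist y y' + 2 * C := by
      linarith [dist_triangle4_left y y' (f (g y)) (f (g y')), hg y, hg y']
    calc dist (g y) (g y') ≤ lam * (dist (f (g y)) (f (g y')) + eps) := hf.dist_le _ _
      _ ≤ lam * (dist y y' + 2 * C + eps) := by gcongr
      _ = lam * dist y y' + lam * (eps + 2 * C) := by ring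
  · calc dist x (g (f x)) ≤ lam * (dist (f x) (f (g (f x))) + eps) := hf.dist_le _ _
      _ ≤ lam * (C + eps) := by gcongr; exact hg (f x)

theorem QuasiIsometric.symm (h : QuasiIsometric X Y) : QuasiIsometric Y X := by
  obtain ⟨lam, eps, C, f, hf⟩ := h
  choose g hg using hf.2.2.2.2
  exact ⟨_, _, _, g, hf.quasiInverse hg⟩

theorem QuasiIsometric.growLE_adFun (h : QuasiIsometric X Y) : GrowLE (adFun X) (adFun Y) := by
  obtain ⟨lam, eps, C, f, hf⟩ := h
  exact hf.growLE_adFun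

theorem QuasiIsometric.growEquiv_adFun (h : QuasiIsometric X Y) :
    GrowEquiv (adFun X) (adFun Y) :=
  ⟨h.growLE_adFun, h.symm.growLE_adFun⟩

theorem isQuasiIsometry_of_isometry (hf : Isometry f) (hC : 0 ≤ C)
    (hdense : ∀ y, ∃ x, dist y (f x) ≤ C) : IsQuasiIsometry 1 0 C f :=
  ⟨le_rfl, le_rfl, hC, fun x x' => by simp [hf.dist_eq], hdense⟩

end QuasiIsometry

section Neighborhood

variable {X : Type*} [MetricSpace X] {A : Set X} {R : ℝ}

theorem subset_setOf_infDist_le (A : Set X) (hR : 0 ≤ R) : A ⊆ {x | infDist x A ≤ R} :=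
  fun _ ha => (infDist_zero_of_mem ha).trans_le hR

theorem quasiIsometric_neighborhood (hA : A.Nonempty) (hR : 0 ≤ R) :
    QuasiIsometric A {x | infDist x A ≤ R} := by
  refine ⟨1, 0, R + 1, Set.inclusion (subset_setOf_infDist_le A hR),
    isQuasiIsometry_of_isometry (fun _ _ => rfl) (by positivity) ?_⟩
  rintro ⟨x, hx : infDist x A ≤ R⟩
  obtain ⟨a, ha, hxa⟩ := (infDist_lt_iff hA).1 (hx.trans_lt (lt_add_one R))
  exact ⟨⟨a, ha⟩, hxa.le⟩

theorem adFun_neighborhood_general (hA : A.Nonempty) (hR : 0 ≤ R) :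
    GrowEquiv (adFun {x | infDist x A ≤ R}) (adFun A) :=
  (quasiIsometric_neighborhood hA hR).symm.growEquiv_adFun

end Neighborhood

/-- In a finitely generated group, the asymptotic dimension function of the
`R`-neighborhood of a nonempty subset has the same growth as that of the
subset itself. -/
theorem adFun_neighborhood {Γ : Type*} [Group Γ] [MetricSpace Γ]
    (S : Finset Γ) (hword : IsWordMetric S)
    (A : Set Γ) (hA : A.Nonempty) (R : ℝ) (hR : 0 < R) :
    GrowEquiv (adFun ↥{γ : Γ | Metric.infDist γ A ≤ R}) (adFun ↥A) :=
  adFun_neighborhood_general hA hR.le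

end AsDim
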